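/- (Fundamental quadratic identity) Let Ω and Υ be types and let A : Ω → Fin 4 → Fin 4 → ℝ and B : Υ → Fin 4 → Fin 4 → ℝ satisfy A^{ω}_{ab} = −A^{ω}_{ba} and B^{υ}_{ab} = −B^{υ}_{ba} for all ω, υ and all indices. Define the trace-free auxiliary tensor Ĉ^{ω,υ}_{ab} = A^{ω}_{ac} B^{υ c}{}_{b} + (1/4)(A^{ω rs} B^{υ}_{rs}) η_{ab}. Then for all ω ∈ Ω, υ ∈ Υ and all indices a,b,c,d: (⋆A^{ω})_{ab} (⋆B^{υ})^{cd} + A^{ω cd} B^{υ}_{ab} = −(δ^{c}_{a} Ĉ^{ω,υ d}{}_{b} − δ^{d}_{a} Ĉ^{ω,υ c}{}_{b} − δ^{c}_{b} Ĉ^{ω,υ d}{}_{a} + δ^{d}_{b} Ĉ^{ω,υ c}{}_{a}), where ⋆F_{ab} = (1/2) ε_{ab}{}^{pq} F_{pq} denotes the Hodge dual of an antisymmetric rank-2 tensor. -/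

import Mathlib

noncomputable section

/-- The Minkowski metric `η = diag(+1,−1,−1,−1)` on `ℝ⁴`.  Its inverse has the
same components, so `mink` is also used to raise indices. -/
def mink : Fin 4 → Fin 4 → ℝ :=
  fun a b => if a = b then (if a = 0 then 1 else -1) else 0

/-- The totally antisymmetric Levi-Civita tensor with all indices down and
`ε₀₁₂₃ = +1`, via the Vandermonde-product formula. -/
def lev : Fin 4 → Fin 4 → Fin 4 → Fin 4 → ℝ :=
  fun a b c d =>
    (((b : ℕ) : ℝ) - ((a : ℕ) : ℝ)) * (((c : ℕ) : ℝ) - ((a : ℕ) : ℝ)) *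
    (((d : ℕ) : ℝ) - ((a : ℕ) : ℝ)) * (((c : ℕ) : ℝ) - ((b : ℕ) : ℝ)) *
    (((d : ℕ) : ℝ) - ((b : ℕ) : ℝ)) * (((d : ℕ) : ℝ) - ((c : ℕ) : ℝ)) / 12

/-- `ε_{ab}{}^{pq}`: the Levi-Civita tensor with its last two indices raised
by the Minkowski metric. -/
def levUp (a b p q : Fin 4) : ℝ := ∑ r, ∑ s, mink p r * mink q s * lev a b r s

/-- The Kronecker delta on `Fin 4`. -/
def kd (a b : Fin 4) : ℝ := if a = b then 1 else 0

/-- Hodge dual `⋆F_{ab} = (1/2) ε_{ab}{}^{pq} F_{pq}` of a rank-2 tensor. -/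
def hodge2 (F : Fin 4 → Fin 4 → ℝ) (a b : Fin 4) : ℝ :=
  (1/2) * ∑ p, ∑ q, levUp a b p q * F p q

/-- Rank-2 tensor with both indices raised by the Minkowski metric. -/
def up2 (F : Fin 4 → Fin 4 → ℝ) (a b : Fin 4) : ℝ :=
  ∑ p, ∑ q, mink a p * mink b q * F p q

/-- The trace-free auxiliary tensor
`Ĉ^{ω,υ}_{ab} = A^{ω}_{ac} B^{υ c}{}_{b} + (1/4)(A^{ω rs} B^{υ}_{rs}) η_{ab}`. -/
def Chat {Ω Υ : Type*} (A : Ω → Fin 4 → Fin 4 → ℝ) (B : Υ → Fin 4 → Fin 4 → ℝ)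
    (ω : Ω) (υ : Υ) (a b : Fin 4) : ℝ :=
  (∑ c, ∑ p, A ω a c * mink c p * B υ p b) +
    (1/4) * (∑ r, ∑ s, up2 (A ω) r s * B υ r s) * mink a b

/-!
Since `det η = -1`, raising all four indices of `ε` reverses its sign, so `⋆A ⊗ ⋆B` is
`-1/4` times the contraction of `ε_{abpq} ε_{cdrs}` with `A^{pq} B_{rs}`. This product of
Levi-Civita symbols is the determinant of a `4 × 4` matrix of Kronecker deltas, by
multiplicativity of `det`; its Laplace expansion, contracted with two antisymmetric tensors,
gives the `A^{cd} B_{ab}` term, the four matrix products `A^{ce} B_{eb}`, and a trace term,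
which the `1/4`-trace in `Ĉ` absorbs. This contraction holds in every dimension and involves
no metric.
-/

open Matrix

theorem sum_antisymm_mul_swap {n R : Type*} [Fintype n] [Ring R] {X : n → n → R}
    (hX : ∀ i j, X i j = -X j i) (f : n → n → R) :
    ∑ p, ∑ q, X p q * f q p = -∑ p, ∑ q, X p q * f p q := by
  rw [Finset.sum_comm]
  simp only [← Finset.sum_neg_distrib]
  refine Finset.sum_congr rfl fun p _ => Finset.sum_congr rfl fun q _ => ?_
  rw [hX q p, neg_mul]

/-- Laplace expansion along the first two columns. -/
theorem det_fin_four_laplace {R : Type*} [CommRing R] (M : Matrix (Fin 4) (Fin 4) R) :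
    M.det =
      (M 0 0 * M 1 1 - M 0 1 * M 1 0) * (M 2 2 * M 3 3 - M 2 3 * M 3 2) -
      (M 0 0 * M 2 1 - M 0 1 * M 2 0) * (M 1 2 * M 3 3 - M 1 3 * M 3 2) +
      (M 0 0 * M 3 1 - M 0 1 * M 3 0) * (M 1 2 * M 2 3 - M 1 3 * M 2 2) +
      (M 1 0 * M 2 1 - M 1 1 * M 2 0) * (M 0 2 * M 3 3 - M 0 3 * M 3 2) -
      (M 1 0 * M 3 1 - M 1 1 * M 3 0) * (M 0 2 * M 2 3 - M 0 3 * M 2 2) +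
      (M 2 0 * M 3 1 - M 2 1 * M 3 0) * (M 0 2 * M 1 3 - M 0 3 * M 1 2) := by
  simp only [det_succ_row_zero M, det_fin_three, submatrix_apply, Fin.sum_univ_four,
    Fin.succAbove, Fin.reduceSucc, Fin.reduceCastSucc, Fin.reduceLT, ↓reduceIte,
    Fin.coe_ofNat_eq_mod]
  ring

theorem det_vandermonde_fin_four {R : Type*} [CommRing R] (v : Fin 4 → R) :
    (vandermonde v).det =
      (v 1 - v 0) * (v 2 - v 0) * (v 3 - v 0) * (v 2 - v 1) * (v 3 - v 1) * (v 3 - v 2) := by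
  simp only [det_fin_four_laplace, vandermonde_apply, Fin.coe_ofNat_eq_mod, Nat.reduceMod]
  ring

section GeneralizedKronecker

variable {ι n R : Type*} [Fintype ι] [DecidableEq ι] [DecidableEq n] [CommRing R]

/-- The generalized Kronecker delta `δ_{f}^{g} = det (δ_{f i}^{g j})`. With `g = id` it is the
Levi-Civita symbol of the index tuple `f`. -/
def generalizedKronecker (R : Type*) [CommRing R] (f g : ι → n) : R :=
  ((1 : Matrix n n R).submatrix f g).det

theorem generalizedKronecker_comm (f g : ι → n) :
    generalizedKronecker R f g = generalizedKronecker R g f := by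
  rw [generalizedKronecker, ← det_transpose, transpose_submatrix, transpose_one,
    generalizedKronecker]

theorem det_submatrix_id [Fintype n] (M : Matrix n n R) (f : n → n) :
    (M.submatrix f id).det = generalizedKronecker R f id * M.det := by
  rw [generalizedKronecker, ← det_mul]
  exact congrArg det (one_submatrix_mul f (Equiv.refl n) M).symm

theorem generalizedKronecker_id_mul_generalizedKronecker_id [Fintype n] (f g : n → n) :
    generalizedKronecker R f id * generalizedKronecker R g id = generalizedKronecker R f g := by
  rw [generalizedKronecker_comm g, generalizedKronecker, generalizedKronecker, ← det_mul,
    ← submatrix_mul _ _ _ _ _ Function.bijective_id, one_mul, generalizedKronecker]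

theorem prod_mul_generalizedKronecker_id [Fintype n] (w : n → R) (f : n → n) :
    (∏ i, w (f i)) * generalizedKronecker R f id = (∏ i, w i) * generalizedKronecker R f id := by
  have row_scaling : (diagonal w).submatrix f id =
      diagonal (w ∘ f) * (1 : Matrix n n R).submatrix f id := by
    ext i j
    simp [diagonal_apply, one_apply]
  calc (∏ i, w (f i)) * generalizedKronecker R f id
      = ((diagonal w).submatrix f id).det := by
        simp only [row_scaling, det_mul, det_diagonal, generalizedKronecker, Function.comp_apply]
    _ = (∏ i, w i) * generalizedKronecker R f id := by
        rw [det_submatrix_id, det_diagonal, mul_comm]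

theorem generalizedKronecker_pair (a b c d : n) :
    generalizedKronecker R ![a, b] ![c, d] =
      (1 : Matrix n n R) a c * (1 : Matrix n n R) b d -
        (1 : Matrix n n R) a d * (1 : Matrix n n R) b c :=
  det_fin_two _

theorem generalizedKronecker_four (a b p q c d r s : n) :
    generalizedKronecker R ![a, b, p, q] ![c, d, r, s] =
      generalizedKronecker R ![a, b] ![c, d] * generalizedKronecker R ![p, q] ![r, s] -
      generalizedKronecker R ![a, p] ![c, d] * generalizedKronecker R ![b, q] ![r, s] +
      generalizedKronecker R ![a, q] ![c, d] * generalizedKronecker R ![b, p] ![r, s] +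
      generalizedKronecker R ![b, p] ![c, d] * generalizedKronecker R ![a, q] ![r, s] -
      generalizedKronecker R ![b, q] ![c, d] * generalizedKronecker R ![a, p] ![r, s] +
      generalizedKronecker R ![p, q] ![c, d] * generalizedKronecker R ![a, b] ![r, s] := by
  simp only [generalizedKronecker_pair]
  exact det_fin_four_laplace _

variable [Fintype n] {X Y : n → n → R}

theorem sum_generalizedKronecker_pair_mul (hY : ∀ i j, Y i j = -Y j i) (a b : n) :
    ∑ r, ∑ s, generalizedKronecker R ![a, b] ![r, s] * Y r s = 2 * Y a b := by
  calc ∑ r, ∑ s, generalizedKronecker R ![a, b] ![r, s] * Y r s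
      = Y a b - Y b a := by
        simp [generalizedKronecker_pair, one_apply, sub_mul, Finset.sum_sub_distrib]
    _ = 2 * Y a b := by rw [hY b a]; ring

theorem sum_generalizedKronecker_four_mul (hY : ∀ i j, Y i j = -Y j i) (a b p q c d : n) :
    ∑ r, ∑ s, generalizedKronecker R ![a, b, p, q] ![c, d, r, s] * Y r s =
      2 * (generalizedKronecker R ![a, b] ![c, d] * Y p q -
        generalizedKronecker R ![a, p] ![c, d] * Y b q +
        generalizedKronecker R ![a, q] ![c, d] * Y b p +
        generalizedKronecker R ![b, p] ![c, d] * Y a q -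
        generalizedKronecker R ![b, q] ![c, d] * Y a p +
        generalizedKronecker R ![p, q] ![c, d] * Y a b) := by
  simp only [generalizedKronecker_four, add_mul, sub_mul, Finset.sum_add_distrib,
    Finset.sum_sub_distrib, mul_assoc, ← Finset.mul_sum, sum_generalizedKronecker_pair_mul hY]
  ring

theorem sum_mul_generalizedKronecker_pair_mul_antisymm (hY : ∀ i j, Y i j = -Y j i) (a b c d : n) :
    ∑ p, ∑ q, X p q * (generalizedKronecker R ![a, p] ![c, d] * Y b q) =
      (1 : Matrix n n R) a d * ∑ e, X c e * Y e b -
        (1 : Matrix n n R) a c * ∑ e, X d e * Y e b := by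
  have sum_one_mul (i : n) (g : n → R) : ∑ p, (1 : Matrix n n R) p i * g p = g i := by
    simp [one_apply]
  calc ∑ p, ∑ q, X p q * (generalizedKronecker R ![a, p] ![c, d] * Y b q)
      = (1 : Matrix n n R) a d * ∑ p, (1 : Matrix n n R) p c * ∑ e, X p e * Y e b -
          (1 : Matrix n n R) a c * ∑ p, (1 : Matrix n n R) p d * ∑ e, X p e * Y e b := by
        simp only [Finset.mul_sum, ← Finset.sum_sub_distrib, generalizedKronecker_pair, hY b]
        refine Finset.sum_congr rfl fun p _ => Finset.sum_congr rfl fun q _ => ?_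
        ring
    _ = (1 : Matrix n n R) a d * ∑ e, X c e * Y e b -
          (1 : Matrix n n R) a c * ∑ e, X d e * Y e b := by
        rw [sum_one_mul, sum_one_mul]

theorem sum_generalizedKronecker_four_mul_mul (hX : ∀ i j, X i j = -X j i)
    (hY : ∀ i j, Y i j = -Y j i) (a b c d : n) :
    ∑ p, ∑ q, X p q * ∑ r, ∑ s, generalizedKronecker R ![a, b, p, q] ![c, d, r, s] * Y r s =
      2 * (∑ r, ∑ s, X r s * Y r s) * generalizedKronecker R ![a, b] ![c, d] +
        4 * (X c d * Y a b + (1 : Matrix n n R) a c * ∑ e, X d e * Y e b -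
          (1 : Matrix n n R) a d * ∑ e, X c e * Y e b -
          (1 : Matrix n n R) b c * ∑ e, X d e * Y e a +
          (1 : Matrix n n R) b d * ∑ e, X c e * Y e a) := by
  have trace_term : ∑ p, ∑ q, X p q * (generalizedKronecker R ![a, b] ![c, d] * Y p q) =
      (∑ r, ∑ s, X r s * Y r s) * generalizedKronecker R ![a, b] ![c, d] := by
    simp only [Finset.sum_mul, mul_assoc, mul_comm (generalizedKronecker R _ _)]
  have outer_term : ∑ p, ∑ q, X p q * (generalizedKronecker R ![p, q] ![c, d] * Y a b) =
      2 * X c d * Y a b := by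
    simp only [← sum_generalizedKronecker_pair_mul hX, Finset.sum_mul,
      generalizedKronecker_comm ![c, d], mul_left_comm, mul_assoc]
  have mixed_term_swap (i j : n) :
      ∑ p, ∑ q, X p q * (generalizedKronecker R ![i, q] ![c, d] * Y j p) =
        -∑ p, ∑ q, X p q * (generalizedKronecker R ![i, p] ![c, d] * Y j q) :=
    sum_antisymm_mul_swap hX fun p q => generalizedKronecker R ![i, p] ![c, d] * Y j q
  simp only [sum_generalizedKronecker_four_mul hY, mul_left_comm _ (2 : R), ← Finset.mul_sum,
    mul_add, mul_sub, Finset.sum_add_distrib, Finset.sum_sub_distrib, trace_term, outer_term,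
    mixed_term_swap, sum_mul_generalizedKronecker_pair_mul_antisymm hY]
  ring

end GeneralizedKronecker

theorem mink_eq_zero {a b : Fin 4} (h : a ≠ b) : mink a b = 0 :=
  if_neg h

theorem mink_self_mul_self (a : Fin 4) : mink a a * mink a a = 1 := by
  by_cases h : a = 0 <;> simp [mink, h]

theorem prod_mink_self : ∏ a, mink a a = -1 := by
  simp [Fin.prod_univ_four, mink]

theorem sum_mink_mul (a : Fin 4) (f : Fin 4 → ℝ) :
    ∑ p, mink a p * f p = mink a a * f a :=
  Finset.sum_eq_single a (fun b _ hb => by rw [mink_eq_zero hb.symm, zero_mul]) (by simp)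

theorem up2_apply (F : Fin 4 → Fin 4 → ℝ) (a b : Fin 4) :
    up2 F a b = mink a a * mink b b * F a b := by
  simp only [up2, mul_assoc, ← Finset.mul_sum, sum_mink_mul]

theorem up2_antisymm {F : Fin 4 → Fin 4 → ℝ} (hF : ∀ a b, F a b = -F b a) (a b : Fin 4) :
    up2 F a b = -up2 F b a := by
  rw [up2_apply, up2_apply, hF]
  ring

theorem kd_eq_one_apply (a b : Fin 4) : kd a b = (1 : Matrix (Fin 4) (Fin 4) ℝ) b a := by
  simp only [kd, one_apply, eq_comm]

theorem lev_eq_generalizedKronecker (a b c d : Fin 4) :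
    lev a b c d = generalizedKronecker ℝ ![a, b, c, d] id := by
  let v : Fin 4 → ℝ := fun i => (i : ℕ)
  have vandermonde_rows : 12 * lev a b c d = (vandermonde (v ∘ ![a, b, c, d])).det := by
    rw [det_vandermonde_fin_four]
    exact mul_div_cancel₀ _ (by norm_num)
  have det_vandermonde_nodes : (vandermonde v).det = 12 := by
    norm_num [det_vandermonde_fin_four, v]
  have permuted_nodes : (vandermonde (v ∘ ![a, b, c, d])).det =
      generalizedKronecker ℝ ![a, b, c, d] id * (vandermonde v).det :=
    det_submatrix_id (vandermonde v) ![a, b, c, d]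
  rw [det_vandermonde_nodes] at permuted_nodes
  linarith

theorem lev_mul_lev (a b p q c d r s : Fin 4) :
    lev a b p q * lev c d r s = generalizedKronecker ℝ ![a, b, p, q] ![c, d, r, s] := by
  simp only [lev_eq_generalizedKronecker, generalizedKronecker_id_mul_generalizedKronecker_id]

theorem mink_mul_lev (a b c d : Fin 4) :
    mink a a * mink b b * mink c c * mink d d * lev a b c d = -lev a b c d := by
  have h := prod_mul_generalizedKronecker_id (fun i => mink i i) ![a, b, c, d]
  rw [prod_mink_self, Fin.prod_univ_four, ← lev_eq_generalizedKronecker] at h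
  simpa using h

theorem hodge2_eq_sum_up2 (F : Fin 4 → Fin 4 → ℝ) (a b : Fin 4) :
    hodge2 F a b = 1 / 2 * ∑ p, ∑ q, up2 F p q * lev a b p q := by
  have levUp_apply (p q : Fin 4) : levUp a b p q = mink p p * mink q q * lev a b p q :=
    up2_apply (lev a b) p q
  simp only [hodge2, levUp_apply, up2_apply, mul_right_comm]

theorem up2_hodge2 (F : Fin 4 → Fin 4 → ℝ) (c d : Fin 4) :
    up2 (hodge2 F) c d = -(1 / 2) * ∑ r, ∑ s, lev c d r s * F r s := by
  rw [up2_apply, hodge2_eq_sum_up2, mul_left_comm, neg_mul, ← mul_neg]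
  simp only [Finset.mul_sum, ← Finset.sum_neg_distrib]
  refine Finset.sum_congr rfl fun r _ => Finset.sum_congr rfl fun s _ => ?_
  rw [up2_apply, ← neg_mul, ← mink_mul_lev]
  ring

theorem hodge2_mul_up2_hodge2 (F G : Fin 4 → Fin 4 → ℝ) (a b c d : Fin 4) :
    hodge2 F a b * up2 (hodge2 G) c d =
      -(1 / 4) * ∑ p, ∑ q, up2 F p q *
        ∑ r, ∑ s, generalizedKronecker ℝ ![a, b, p, q] ![c, d, r, s] * G r s := by
  simp only [hodge2_eq_sum_up2 F, up2_hodge2, ← lev_mul_lev, mul_assoc, ← Finset.mul_sum]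
  simp only [← mul_assoc, ← Finset.sum_mul]
  ring

theorem sum_mink_mul_Chat {Ω Υ : Type*} (A : Ω → Fin 4 → Fin 4 → ℝ)
    (B : Υ → Fin 4 → Fin 4 → ℝ) (ω : Ω) (υ : Υ) (a b : Fin 4) :
    ∑ p, mink a p * Chat A B ω υ p b =
      ∑ e, up2 (A ω) a e * B υ e b +
        1 / 4 * (∑ r, ∑ s, up2 (A ω) r s * B υ r s) * (1 : Matrix (Fin 4) (Fin 4) ℝ) b a := by
  have mink_mul_mink : mink a a * mink a b = (1 : Matrix (Fin 4) (Fin 4) ℝ) b a := by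
    rcases eq_or_ne a b with rfl | h
    · rw [mink_self_mul_self, one_apply_eq]
    · rw [mink_eq_zero h, mul_zero, one_apply_ne h.symm]
  rw [sum_mink_mul, Chat, mul_add, mul_left_comm (mink a a), mink_mul_mink]
  simp only [mul_assoc, ← Finset.mul_sum, sum_mink_mul]
  simp only [Finset.mul_sum, up2_apply, mul_assoc, mul_left_comm]

/-- Fundamental quadratic identity for pairs of tensors antisymmetric in a
pair of indices. -/
theorem fundamental_quadratic_identity {Ω Υ : Type*}
    (A : Ω → Fin 4 → Fin 4 → ℝ) (B : Υ → Fin 4 → Fin 4 → ℝ)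
    (hA : ∀ ω a b, A ω a b = -A ω b a)
    (hB : ∀ υ a b, B υ a b = -B υ b a) :
    ∀ (ω : Ω) (υ : Υ) (a b c d : Fin 4),
      hodge2 (A ω) a b * up2 (hodge2 (B υ)) c d + up2 (A ω) c d * B υ a b =
        -(kd c a * (∑ p, mink d p * Chat A B ω υ p b) -
          kd d a * (∑ p, mink c p * Chat A B ω υ p b) -
          kd c b * (∑ p, mink d p * Chat A B ω υ p a) +
          kd d b * (∑ p, mink c p * Chat A B ω υ p a)) := by
  intro ω υ a b c d
  rw [hodge2_mul_up2_hodge2, sum_generalizedKronecker_four_mul_mul (up2_antisymm (hA ω)) (hB υ),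
    generalizedKronecker_pair]
  simp only [sum_mink_mul_Chat, kd_eq_one_apply]
  ring
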